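/- The Eisenstein series E₄ satisfies the fourth-order nonlinear ODE 16Q₄ − 5P₄ − 144 = 0, which in cleared polynomial form states: for every τ ∈ ℍ, 16·E₄²·(20E₄E₄'''' − 140E₄'E₄''' + 126(E₄'')²)·A − 5B² − 144A³ = 0, where A = 4E₄E₄'' − 5(E₄')² and B = 16E₄²E₄''' − 72E₄E₄'E₄'' + 60(E₄')³. -/

import Mathlib

open Complex

noncomputable section

/-- The normalized derivative `F' = (2πi)⁻¹ dF/dτ`. -/
def nderiv (F : ℂ → ℂ) : ℂ → ℂ := fun τ => (2 * Real.pi * Complex.I)⁻¹ * deriv F τ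

/-- `q = e^{2πiτ}`. -/
def qq (τ : ℂ) : ℂ := Complex.exp (2 * Real.pi * Complex.I * τ)

/-- Sum of the `k`-th powers of the positive divisors of `n`. -/
def sigma' (k n : ℕ) : ℕ := ∑ d ∈ n.divisors, d ^ k

/-- The Eisenstein series `E₄`. -/
def E4 : ℂ → ℂ := fun τ => 1 + 240 * ∑' n : ℕ, (sigma' 3 (n + 1) : ℂ) * qq τ ^ (n + 1)

namespace RamanujanAux

open UpperHalfPlane hiding I
open Filter Topology Manifold MatrixGroups ModularForm Derivative EisensteinSeries

/-- A level one holomorphic form of weight less than twelve vanishing at infinity is zero. -/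
lemma eq_zero_of_lt_twelve {k : ℤ} (hk : k < 12) (f : ℍ → ℂ) (hf : MDiff f)
    (hs : ∀ γ : SL(2, ℤ), f ∣[k] γ = f) (h0 : IsZeroAtImInfty f) : f = 0 := by
  let F : CuspForm 𝒮ℒ k :=
    { toFun := f
      slash_action_eq' := by
        intro A hA
        obtain ⟨A, rfl⟩ := hA
        exact hs A
      holo' := hf
      zero_at_cusps' := by
        intro c hc
        rw [Subgroup.IsArithmetic.isCusp_iff_isCusp_SL2Z] at hc
        rw [OnePoint.isZeroAt_iff_forall_SL2Z hc]
        intro γ _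
        change IsZeroAtImInfty (f ∣[k] γ)
        rw [hs]
        exact h0 }
  have hF : F = 0 := rank_zero_iff_forall_zero.mp (CuspForm.rank_eq_zero_of_weight_lt_twelve hk) F
  ext z
  exact DFunLike.congr_fun hF z

lemma tendsto_of_hasSum {f : ℍ → ℂ} {c : ℕ → ℂ} (hf : MDiff f)
    (hs : ∀ τ : ℍ, HasSum (fun m ↦ c m • Function.Periodic.qParam 1 τ ^ m) (f τ)) :
    Tendsto f atImInfty (𝓝 (c 0)) := by
  have hper : Function.Periodic (f ∘ ofComplex) (1 : ℝ) := by
    intro w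
    by_cases hw : 0 < w.im
    · have hw' : 0 < (w + (1 : ℝ)).im := by simpa using hw
      simp only [Function.comp_apply, ofComplex_apply_of_im_pos hw', ofComplex_apply_of_im_pos hw]
      have h1 := hs ⟨w + (1 : ℝ), hw'⟩
      have h2 := hs ⟨w, hw⟩
      have : Function.Periodic.qParam 1 (w + (1 : ℝ)) = Function.Periodic.qParam 1 w := by
        simp only [Function.Periodic.qParam]
        push_cast
        rw [show 2 * (Real.pi : ℂ) * I * (w + 1) / 1 = 2 * Real.pi * I * w / 1 + 2 * Real.pi * I by
          ring]
        exact Complex.exp_periodic _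
      simp only [this] at h1
      exact h1.unique h2
    · have hw' : (w + (1 : ℝ)).im ≤ 0 := by simpa using hw
      simp only [Function.comp_apply, ofComplex_apply_of_im_nonpos hw',
        ofComplex_apply_of_im_nonpos (not_lt.mp hw)]
  have hb := isBoundedAtImInfty_of_hasSum_qExpansion one_pos hs
  have hanal := analyticAt_cuspFunction_zero one_pos hper hf hb
  have h0 : cuspFunction 1 f 0 = c 0 := by
    have := (hasFPowerSeriesOnBall_cuspFunction one_pos hanal hs).hasFPowerSeriesAt.coeff_zero ![]
    rw [← this]
    simp
  rw [← h0]
  exact (hanal.continuousAt.tendsto.comp (qParam_tendsto_atImInfty one_pos)).congr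
    (fun τ ↦ eq_cuspFunction τ one_ne_zero hper)

lemma tendsto_E2 : Tendsto E2 atImInfty (𝓝 1) := by
  have := tendsto_of_hasSum (f := E2) (c := fun m ↦ if m = 0 then 1 else -24 * ArithmeticFunction.sigma 1 m)
    E2_mdifferentiable (fun τ ↦ by
    simpa only [Function.Periodic.qParam, ofReal_one, div_one] using hasSum_qExpansion_E2 (z := τ))
  simpa using this

lemma tendsto_E {k : ℕ} (hk : 3 ≤ k) (hk2 : Even k) :
    Tendsto (E hk) atImInfty (𝓝 1) := by
  have := tendsto_of_hasSum (f := E hk) (c := fun m ↦ (qExpansion 1 (E hk)).coeff m)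
    (E hk).holo' (fun τ ↦ ModularForm.hasSum_qExpansion (E hk) one_pos one_mem_strictPeriods_SL τ)
  simpa only [E_qExpansion_coeff_zero hk hk2] using this

/-- Cauchy estimate: the derivative of a function with a limit at infinity tends to zero. -/
lemma tendsto_D {f : ℍ → ℂ} {c : ℂ} (hf : MDiff f) (h : Tendsto f atImInfty (𝓝 c)) :
    Tendsto (D f) atImInfty (𝓝 0) := by
  have h' : IsZeroAtImInfty (fun z ↦ f z - c) := by
    have := h.sub_const c
    simpa [IsZeroAtImInfty, ZeroAtFilter] using this
  suffices IsZeroAtImInfty (fun z : ℍ ↦ deriv (f ∘ ofComplex) z) by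
    have := Tendsto.const_mul ((2 * Real.pi * I)⁻¹ : ℂ) this
    rw [mul_zero] at this
    exact this
  rw [isZeroAtImInfty_iff] at h' ⊢
  intro ε hε
  obtain ⟨A, hA⟩ := h' ε hε
  refine ⟨max A 0 + 2, fun z hz ↦ ?_⟩
  have him : ∀ w ∈ Metric.closedBall (z : ℂ) 1, max A 0 + 1 ≤ w.im := by
    intro w hw
    rw [Metric.mem_closedBall, dist_eq_norm] at hw
    have h1 := (Complex.abs_im_le_norm (w - z)).trans hw
    rw [abs_le] at h1
    have h2 : max A 0 + 2 ≤ (z : ℂ).im := hz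
    simp only [sub_im] at h1
    linarith [h1.1]
  have hd : deriv (f ∘ ofComplex) z = deriv (fun w ↦ (f ∘ ofComplex) w - c) z := by
    rw [deriv_sub_const]
  rw [hd]
  have := Complex.norm_deriv_le_of_forall_mem_sphere_norm_le (c := (z : ℂ)) (R := 1) (C := ε)
    (f := fun w ↦ (f ∘ ofComplex) w - c) one_pos ?_ ?_
  · simpa using this
  · apply DifferentiableOn.diffContOnCl
    rw [closure_ball _ one_ne_zero]
    refine DifferentiableOn.sub_const ?_ c
    refine (UpperHalfPlane.mdifferentiable_iff.mp hf).mono ?_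
    intro w hw
    have := him w hw
    have h0 := le_max_right A 0
    change 0 < w.im
    linarith
  · intro w hw
    have hw1 := him w (Metric.sphere_subset_closedBall hw)
    have h0 := le_max_right A 0
    have hA0 := le_max_left A 0
    have hw0 : 0 < w.im := by linarith
    have := hA ⟨w, hw0⟩ (by change A ≤ w.im; linarith)
    simpa [ofComplex_apply_of_im_pos hw0] using this

lemma E_slash {k : ℕ} (hk : 3 ≤ k) (γ : SL(2, ℤ)) : (E hk : ℍ → ℂ) ∣[(k : ℤ)] γ = E hk :=
  (E hk).slash_action_eq' _ ⟨γ, rfl⟩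

lemma D_E4 : D E₄ = fun z ↦ (E2 z * E₄ z - E₆ z) / 3 := by
  have hz : serreDerivative 4 E₄ + (1 / 3 : ℂ) • (E₆ : ℍ → ℂ) = 0 := by
    apply eq_zero_of_lt_twelve (k := 6) (by norm_num)
    · exact (serreDerivative_mdifferentiable _ E₄.holo').add (E₆.holo'.const_smul _)
    · intro γ
      have h1 := serreDerivative_slash_invariant (k := 4) (F := E₄) E₄.holo' (γ := γ) (E_slash _ γ)
      have h2 : (E₆ : ℍ → ℂ) ∣[(6 : ℤ)] γ = E₆ := E_slash _ γ
      simp only [Int.cast_ofNat] at h1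
      rw [SlashAction.add_slash, ModularForm.SL_smul_slash, h2]
      exact congrArg (· + _) h1
    · have h1 := tendsto_D E₄.holo' (tendsto_E (by norm_num : 3 ≤ 4) ⟨2, rfl⟩)
      have h2 := tendsto_E (by norm_num : 3 ≤ 4) ⟨2, rfl⟩
      have h3 := tendsto_E (by norm_num : 3 ≤ 6) ⟨3, rfl⟩
      have := (h1.sub ((tendsto_E2.const_mul (4 * 12⁻¹)).mul h2)).add (h3.const_mul (1 / 3))
      exact this.mono_right (by norm_num)
  ext z
  have := congrFun hz z
  simp at this
  linear_combination this

lemma D_E6 : D E₆ = fun z ↦ (E2 z * E₆ z - E₄ z ^ 2) / 2 := by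
  have hz : serreDerivative 6 E₆ + (1 / 2 : ℂ) • ((E₄ : ℍ → ℂ) * E₄) = 0 := by
    apply eq_zero_of_lt_twelve (k := 8) (by norm_num)
    · exact (serreDerivative_mdifferentiable _ E₆.holo').add ((E₄.holo'.mul E₄.holo').const_smul _)
    · intro γ
      have h1 := serreDerivative_slash_invariant (k := 6) (F := E₆) E₆.holo' (γ := γ) (E_slash _ γ)
      have h2 : (E₄ : ℍ → ℂ) ∣[(4 : ℤ)] γ = E₄ := E_slash _ γ
      have h3 := ModularForm.mul_slash_SL2 4 4 γ E₄ E₄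
      norm_num at h3
      simp only [Int.cast_ofNat] at h1
      rw [SlashAction.add_slash, ModularForm.SL_smul_slash, h3, h2]
      exact congrArg (· + _) h1
    · have h1 := tendsto_D E₆.holo' (tendsto_E (by norm_num : 3 ≤ 6) ⟨3, rfl⟩)
      have h2 := tendsto_E (by norm_num : 3 ≤ 4) ⟨2, rfl⟩
      have h3 := tendsto_E (by norm_num : 3 ≤ 6) ⟨3, rfl⟩
      have := (h1.sub ((tendsto_E2.const_mul (6 * 12⁻¹)).mul h3)).add ((h2.mul h2).const_mul (1 / 2))
      exact this.mono_right (by norm_num)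
  ext z
  have := congrFun hz z
  simp at this
  linear_combination this

lemma D_D2 (γ : SL(2, ℤ)) (z : ℍ) : D (D2 γ) z = - (2 * Real.pi * I)⁻¹ ^ 2 * D2 γ z ^ 2 := by
  have hz : denom γ z ≠ 0 := denom_ne_zero _ z
  have h1 := hasDerivAt_denom_zpow (γ : GL (Fin 2) ℝ) (-1) z
  have h2 := h1.const_mul (2 * Real.pi * I * γ 1 0)
  have hc : (D2 γ ∘ ofComplex) =ᶠ[𝓝 (z : ℂ)]
      fun w ↦ (2 * Real.pi * I * γ 1 0) * (denom γ w) ^ (-1 : ℤ) := by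
    filter_upwards [isOpen_upperHalfPlaneSet.mem_nhds z.im_pos] with w hw
    simp [D2, ofComplex_apply_of_im_pos hw, div_eq_mul_inv]
  rw [normalizedDerivOfComplex, (h2.congr_of_eventuallyEq hc).deriv]
  have hpi : (Real.pi : ℂ) ≠ 0 := by exact_mod_cast Real.pi_ne_zero
  have hI : I ≠ 0 := I_ne_zero
  simp only [D2]
  simp
  field_simp
  linear_combination ((γ 1 0 : ℂ) ^ 2) * I_sq

lemma D_E2 : D E2 = fun z ↦ (E2 z ^ 2 - E₄ z) / 12 := by
  have hz : (D E2 + (-1 / 12 : ℂ) • (E2 * E2)) + (1 / 12 : ℂ) • (E₄ : ℍ → ℂ) = 0 := by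
    apply eq_zero_of_lt_twelve (k := 4) (by norm_num)
    · exact ((normalizedDerivOfComplex_mdifferentiable E2_mdifferentiable).add
        ((E2_mdifferentiable.mul E2_mdifferentiable).const_smul _)).add (E₄.holo'.const_smul _)
    · intro γ
      have h1 := normalizedDerivOfComplex_SL_slash (k := 2) (F := E2) E2_mdifferentiable (γ := γ)
      have h2 : (E₄ : ℍ → ℂ) ∣[(4 : ℤ)] γ = E₄ := E_slash _ γ
      have h3 := ModularForm.mul_slash_SL2 2 2 γ E2 E2
      norm_num at h3
      rw [SlashAction.add_slash, SlashAction.add_slash, ModularForm.SL_smul_slash,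
        ModularForm.SL_smul_slash, h3, h2, E2_slash_action]
      have hD2 : MDiff (D2 γ) := by
        have := (mdifferentiable_denom_zpow (γ : GL (Fin 2) ℝ) (-1)).const_smul
          (2 * Real.pi * I * γ 1 0)
        have he : D2 γ = (2 * Real.pi * I * γ 1 0) • fun x : ℍ ↦ denom γ x ^ (-1 : ℤ) := by
          ext z
          simp [D2, div_eq_mul_inv]
        rw [he]
        exact this
      rw [E2_slash_action, normalizedDerivOfComplex_sub _ _ E2_mdifferentiable (hD2.const_smul _),
        normalizedDerivOfComplex_smul _ _ hD2] at h1
      congr 1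
      ext z
      have := congrFun h1 z
      simp [D_D2, riemannZeta_two] at this ⊢
      have hpi : (Real.pi : ℂ) ≠ 0 := by exact_mod_cast Real.pi_ne_zero
      obtain ⟨u, hu⟩ : ∃ u : ℂ, u = I * ((γ 1 0 : ℂ) / denom γ z) / Real.pi := ⟨_, rfl⟩
      have hj : D2 γ z = 2 * Real.pi ^ 2 * u := by
        rw [hu, D2]
        field_simp
      have e1 : 2 * (I * ((Real.pi : ℂ)⁻¹ * 2⁻¹)) * ((γ 1 0 : ℂ) / denom γ z) = u := by
        rw [hu]
        field_simp
      have e2 : 6 / (Real.pi : ℂ) ^ 2 * 2⁻¹ * D2 γ z = 6 * u := by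
        rw [hj]
        field_simp
        try norm_num
      have e3 : (6 / (Real.pi : ℂ) ^ 2 * 2⁻¹ * ((I * ((Real.pi : ℂ)⁻¹ * 2⁻¹)) ^ 2 * D2 γ z ^ 2))
          = - 3 * u ^ 2 := by
        rw [hj]
        field_simp
        linear_combination 6 * u ^ 2 * I_sq
      rw [e2]
      rw [e1, e2, e3] at this
      linear_combination - this
    · have h1 := tendsto_D E2_mdifferentiable tendsto_E2
      have h2 := tendsto_E (by norm_num : 3 ≤ 4) ⟨2, rfl⟩
      have := (h1.add ((tendsto_E2.mul tendsto_E2).const_mul (-1 / 12))).add (h2.const_mul (1 / 12))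
      exact this.mono_right (by norm_num)
  ext z
  have := congrFun hz z
  simp at this
  linear_combination this

lemma E4_eq (z : ℍ) : E4 z = E₄ z := by
  rw [q_expansion_bernoulli (by norm_num) ⟨2, rfl⟩]
  have hb : bernoulli 4 = -1 / 30 := by norm_num [bernoulli, bernoulli'_four]
  simp only [zpow_natCast, hb]
  rw [tsum_pnat_eq_tsum_succ
    (f := fun n ↦ (ArithmeticFunction.sigma 3 n : ℂ) * cexp (2 * Real.pi * I * z) ^ n)]
  simp only [E4, sigma', qq, ArithmeticFunction.sigma_apply]
  norm_num

end RamanujanAux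

namespace RamanujanAux

open UpperHalfPlane hiding I
open Filter Topology Manifold MatrixGroups ModularForm Derivative EisensteinSeries

lemma hasDerivAt_of_D {f g : ℍ → ℂ} (hf : MDiff f) (h : D f = g) {τ : ℂ} (hτ : 0 < τ.im) :
    HasDerivAt (f ∘ ofComplex) (2 * Real.pi * I * (g ∘ ofComplex) τ) τ := by
  have hd : DifferentiableAt ℂ (f ∘ ofComplex) τ :=
    (UpperHalfPlane.mdifferentiable_iff.mp hf).differentiableAt
      (isOpen_upperHalfPlaneSet.mem_nhds hτ)
  refine hd.hasDerivAt.congr_deriv ?_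
  rw [← h]
  simp only [Function.comp_apply, ofComplex_apply_of_im_pos hτ, normalizedDerivOfComplex]
  have : (2 * Real.pi * I : ℂ) ≠ 0 := two_pi_I_ne_zero
  exact (mul_inv_cancel_left₀ this _).symm

lemma nderiv_eq {F G g : ℂ → ℂ} (hFG : ∀ τ : ℂ, 0 < τ.im → F τ = G τ)
    (hG : ∀ τ : ℂ, 0 < τ.im → HasDerivAt G (2 * Real.pi * I * g τ) τ) :
    ∀ τ : ℂ, 0 < τ.im → nderiv F τ = g τ := by
  intro τ hτ
  have he : F =ᶠ[𝓝 τ] G := by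
    filter_upwards [isOpen_upperHalfPlaneSet.mem_nhds hτ] with w hw using hFG w hw
  have : (2 * Real.pi * I : ℂ) ≠ 0 := two_pi_I_ne_zero
  rw [nderiv, he.deriv_eq, (hG τ hτ).deriv, inv_mul_cancel_left₀ this]

lemma main_values : ∃ P Q R : ℂ → ℂ, ∀ τ : ℂ, 0 < τ.im →
    E4 τ = Q τ ∧ nderiv E4 τ = (P τ * Q τ - R τ) / 3 ∧
    nderiv (nderiv E4) τ = 5 / 36 * (P τ ^ 2 * Q τ + Q τ ^ 2 - 2 * (P τ * R τ)) ∧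
    nderiv (nderiv (nderiv E4)) τ =
      5 / 72 * (P τ ^ 3 * Q τ + 3 * (P τ * Q τ ^ 2) - 3 * (P τ ^ 2 * R τ) - Q τ * R τ) ∧
    nderiv (nderiv (nderiv (nderiv E4))) τ =
      5 / 864 * (7 * (P τ ^ 4 * Q τ) + 42 * (P τ ^ 2 * Q τ ^ 2) + 3 * Q τ ^ 3
        - 28 * (P τ ^ 3 * R τ) - 28 * (P τ * Q τ * R τ) + 4 * R τ ^ 2) := by
  have hP := fun (τ : ℂ) hτ ↦ hasDerivAt_of_D (τ := τ) E2_mdifferentiable D_E2 hτ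
  have hQ := fun (τ : ℂ) hτ ↦ hasDerivAt_of_D (τ := τ) E₄.holo' D_E4 hτ
  have hR := fun (τ : ℂ) hτ ↦ hasDerivAt_of_D (τ := τ) E₆.holo' D_E6 hτ
  have h0 : ∀ τ : ℂ, 0 < τ.im → E4 τ = (E₄ ∘ ofComplex) τ := by
    intro τ hτ
    rw [Function.comp_apply, ofComplex_apply_of_im_pos hτ, ← E4_eq]
  obtain ⟨P, hPd⟩ : ∃ P, P = E2 ∘ ofComplex := ⟨_, rfl⟩
  obtain ⟨Q, hQd⟩ : ∃ Q : ℂ → ℂ, Q = E₄ ∘ ofComplex := ⟨_, rfl⟩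
  obtain ⟨R, hRd⟩ : ∃ R : ℂ → ℂ, R = E₆ ∘ ofComplex := ⟨_, rfl⟩
  replace hP : ∀ τ : ℂ, 0 < τ.im →
      HasDerivAt P (2 * Real.pi * I * ((P τ ^ 2 - Q τ) / 12)) τ := by
    rw [hPd, hQd]; exact hP
  replace hQ : ∀ τ : ℂ, 0 < τ.im →
      HasDerivAt Q (2 * Real.pi * I * ((P τ * Q τ - R τ) / 3)) τ := by
    rw [hPd, hQd, hRd]; exact hQ
  replace hR : ∀ τ : ℂ, 0 < τ.im →
      HasDerivAt R (2 * Real.pi * I * ((P τ * R τ - Q τ ^ 2) / 2)) τ := by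
    rw [hPd, hQd, hRd]; exact hR
  rw [← hQd] at h0
  have h1 := nderiv_eq h0 hQ
  have h2 := nderiv_eq (g := fun τ ↦ 5 / 36 * (P τ ^ 2 * Q τ + Q τ ^ 2 - 2 * (P τ * R τ))) h1
    (fun τ hτ ↦ by
      refine HasDerivAt.congr_deriv ((((hP τ hτ).mul (hQ τ hτ)).sub (hR τ hτ)).div_const 3) ?_
      ring)
  have h3 := nderiv_eq (g := fun τ ↦
      5 / 72 * (P τ ^ 3 * Q τ + 3 * (P τ * Q τ ^ 2) - 3 * (P τ ^ 2 * R τ) - Q τ * R τ)) h2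
    (fun τ hτ ↦ by
      have p := hP τ hτ
      have q := hQ τ hτ
      have r := hR τ hτ
      refine HasDerivAt.congr_deriv ((((((p.pow 2).mul q).add (q.pow 2)).sub ((p.mul r).const_mul 2)).const_mul
        (5 / 36 : ℂ))) ?_
      simp only [Pi.pow_apply]
      push_cast
      ring)
  have h4 := nderiv_eq (g := fun τ ↦
      5 / 864 * (7 * (P τ ^ 4 * Q τ) + 42 * (P τ ^ 2 * Q τ ^ 2) + 3 * Q τ ^ 3
        - 28 * (P τ ^ 3 * R τ) - 28 * (P τ * Q τ * R τ) + 4 * R τ ^ 2)) h3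
    (fun τ hτ ↦ by
      have p := hP τ hτ
      have q := hQ τ hτ
      have r := hR τ hτ
      refine HasDerivAt.congr_deriv (((((((p.pow 3).mul q).add ((p.mul (q.pow 2)).const_mul 3)).sub
        (((p.pow 2).mul r).const_mul 3)).sub (q.mul r)).const_mul (5 / 72 : ℂ))) ?_
      simp only [Pi.pow_apply]
      push_cast
      ring)
  exact ⟨P, Q, R, fun τ hτ ↦ ⟨h0 τ hτ, h1 τ hτ, h2 τ hτ, h3 τ hτ, h4 τ hτ⟩⟩

end RamanujanAux

/-- The Eisenstein series `E₄` satisfies the fourth-order nonlinear ODE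
`16Q₄ − 5P₄ − 144 = 0` in cleared polynomial form. -/
theorem E4_fourth_order_ODE :
    ∀ τ : ℂ, 0 < τ.im →
      let A := 4 * E4 τ * nderiv (nderiv E4) τ - 5 * (nderiv E4 τ) ^ 2
      let B := 16 * E4 τ ^ 2 * nderiv (nderiv (nderiv E4)) τ -
        72 * E4 τ * nderiv E4 τ * nderiv (nderiv E4) τ + 60 * (nderiv E4 τ) ^ 3
      16 * E4 τ ^ 2 *
          (20 * E4 τ * nderiv (nderiv (nderiv (nderiv E4))) τ -
            140 * nderiv E4 τ * nderiv (nderiv (nderiv E4)) τ +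
            126 * (nderiv (nderiv E4) τ) ^ 2) * A -
        5 * B ^ 2 - 144 * A ^ 3 = 0 := by
  intro τ hτ
  obtain ⟨P, Q, R, h⟩ := RamanujanAux.main_values
  obtain ⟨h0, h1, h2, h3, h4⟩ := h τ hτ
  simp only [h0, h1, h2, h3, h4]
  ring
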